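/- Let n ≥ j ≥ 3 and let τ be a pattern of length j. Let Γ_j be the set of all j-element subsets of [n], let Σ_n be a uniformly random permutation of [n], for α ∈ Γ_j let X_α be the indicator that τ occurs in Σ_n at the positions of α (listed in increasing order), and let 𝕏 = (X_α)_{α∈Γ_j}. Let 𝔹 = (B_α)_{α∈Γ_j} be a family of independent Bernoulli random variables with E B_α = E X_α = 1/j! for all α. Then d_TV( L(𝕏), L(𝔹) ) ≤ 4·D_{n,j} + 2λ/j!, where λ = C(n,j)/j!, D_{n,j} = min(1, λ^{−1})·(d_1 + d_2), d_1 = C(n,j)·(C(n,j) − C(n−j,j))/(j!)², and d_2 = Σ_{s=1}^{j−1} C(n, 2j−s)·2·L_s(τ)/(2j−s)!. -/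

import Mathlib

open scoped Classical
open Filter

noncomputable section

/-- `τ` occurs in `σ` at the strictly increasing positions given by `f`:
`f` is strictly increasing and `σ ∘ f` is order-isomorphic to `τ`. -/
def OccursAt {m n : ℕ} (τ : Equiv.Perm (Fin m)) (σ : Equiv.Perm (Fin n))
    (f : Fin m → Fin n) : Prop :=
  StrictMono f ∧ ∀ k l, σ (f k) < σ (f l) ↔ τ k < τ l

/-- `τ` occurs in `σ` at the set of positions `α` (listed in increasing order). -/
def OccursOn {m n : ℕ} (τ : Equiv.Perm (Fin m)) (σ : Equiv.Perm (Fin n))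
    (α : Finset (Fin n)) : Prop :=
  ∃ f : Fin m → Fin n, StrictMono f ∧ Finset.univ.image f = α ∧
    ∀ k l, σ (f k) < σ (f l) ↔ τ k < τ l

/-- `τ` occurs in `σ` at the consecutive (0-indexed) positions `i, i+1, …, i+m-1`. -/
def OccursConsec {m n : ℕ} (τ : Equiv.Perm (Fin m)) (σ : Equiv.Perm (Fin n)) (i : ℕ) : Prop :=
  ∃ h : i + m ≤ n, ∀ k l : Fin m,
    σ ⟨i + k, by have := k.isLt; omega⟩ < σ ⟨i + l, by have := l.isLt; omega⟩ ↔ τ k < τ l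

/-- The overlap count `L_s(τ)`: the number of permutations of `[2m-s]` containing
two occurrences of `τ` at index sets sharing exactly `s` elements. -/
def overlapCount {m : ℕ} (τ : Equiv.Perm (Fin m)) (s : ℕ) : ℕ :=
  Set.ncard {ρ : Equiv.Perm (Fin (2 * m - s)) |
    ∃ α β : Finset (Fin (2 * m - s)), α.card = m ∧ β.card = m ∧ (α ∩ β).card = s ∧
      OccursOn τ ρ α ∧ OccursOn τ ρ β}

/-- The sequential overlap count `L̄_s(τ)`: the number of permutations of `[2m-s]` with
occurrences of `τ` at positions `(1,…,m)` and `(m-s+1,…,2m-s)`. -/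
def seqOverlapCount {m : ℕ} (τ : Equiv.Perm (Fin m)) (s : ℕ) : ℕ :=
  Set.ncard {ρ : Equiv.Perm (Fin (2 * m - s)) |
    OccursConsec τ ρ 0 ∧ OccursConsec τ ρ (m - s)}

/-- The number of inversions of a permutation. -/
def invCount {n : ℕ} (σ : Equiv.Perm (Fin n)) : ℕ :=
  (Finset.univ.filter fun p : Fin n × Fin n => p.1 < p.2 ∧ σ p.2 < σ p.1).card

/-- The inversion polynomial `I_n(q) = ∏_{j=1}^n (1 + q + ⋯ + q^{j-1})`. -/
def invPoly (n : ℕ) (q : ℝ) : ℝ :=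
  ∏ j ∈ Finset.range n, ∑ i ∈ Finset.range (j + 1), q ^ i

/-- Probability of the event `E` under the uniform distribution on `S_n`. -/
def unifProb {n : ℕ} (E : Set (Equiv.Perm (Fin n))) : ℝ :=
  (E.ncard : ℝ) / (n.factorial : ℝ)

/-- Probability of the event `E` under the Mallows(q) distribution on `S_n`. -/
def mallowsProb {n : ℕ} (q : ℝ) (E : Set (Equiv.Perm (Fin n))) : ℝ :=
  (∑ σ ∈ Finset.univ.filter (· ∈ E), q ^ invCount σ) / invPoly n q

/-- Expectation of `X` under the uniform distribution on `S_n`. -/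
def unifExp {n : ℕ} (X : Equiv.Perm (Fin n) → ℝ) : ℝ :=
  (∑ σ : Equiv.Perm (Fin n), X σ) / (n.factorial : ℝ)

/-- Expectation of `X` under the Mallows(q) distribution on `S_n`. -/
def mallowsExp {n : ℕ} (q : ℝ) (X : Equiv.Perm (Fin n) → ℝ) : ℝ :=
  (∑ σ : Equiv.Perm (Fin n), X σ * q ^ invCount σ) / invPoly n q

/-- The Poisson(lam) probability mass function. -/
def poissonPMF (lam : ℝ) (k : ℕ) : ℝ :=
  Real.exp (-lam) * lam ^ k / (k.factorial : ℝ)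

/-- Total variation distance between the law of the ℕ-valued statistic `W` of a uniformly
random permutation of `[n]` and the Poisson(lam) distribution. -/
def dTVNatUnif {n : ℕ} (W : Equiv.Perm (Fin n) → ℕ) (lam : ℝ) : ℝ :=
  (1 / 2) * ∑' k : ℕ, |unifProb {σ | W σ = k} - poissonPMF lam k|

/-- Total variation distance between the law of the ℕ-valued statistic `W` of a Mallows(q)
random permutation of `[n]` and the Poisson(lam) distribution. -/
def dTVNatMallows {n : ℕ} (q : ℝ) (W : Equiv.Perm (Fin n) → ℕ) (lam : ℝ) : ℝ :=
  (1 / 2) * ∑' k : ℕ, |mallowsProb q {σ | W σ = k} - poissonPMF lam k|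

/-- Total variation distance between the joint law of the indicator family
`(X_α)_{α ∈ I}` of a uniformly random permutation of `[n]` and the joint law of
independent Bernoulli random variables with marginals `p`. -/
def dTVFamUnif {n : ℕ} {I : Type*} [Fintype I] [DecidableEq I]
    (X : Equiv.Perm (Fin n) → I → Prop) (p : I → ℝ) : ℝ :=
  (1 / 2) * ∑ x : I → Bool,
    |unifProb {σ | ∀ α, X σ α ↔ x α = true} - ∏ α, (if x α then p α else 1 - p α)|

/-- Total variation distance between the joint law of the indicator family
`(X_α)_{α ∈ I}` of a Mallows(q) random permutation of `[n]` and the joint law of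
independent Bernoulli random variables with marginals `p`. -/
def dTVFamMallows {n : ℕ} (q : ℝ) {I : Type*} [Fintype I] [DecidableEq I]
    (X : Equiv.Perm (Fin n) → I → Prop) (p : I → ℝ) : ℝ :=
  (1 / 2) * ∑ x : I → Bool,
    |mallowsProb q {σ | ∀ α, X σ α ↔ x α = true} - ∏ α, (if x α then p α else 1 - p α)|

/-!
Compare the two laws on the all-`false` configuration and on the configurations with exactly one
occurrence. This gives `d_TV ≤ 1`, `d_TV ≤ λ`, and
`d_TV ≤ λ² + ∑_α P(X_α = 1 and X_β = 1 for some β ≠ α)`.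

Put `y = (n - j) j / (j + 1)²`. Doubling any of the `j` points of `τ` gives `L_{j-1}(τ) ≥ j`, and
the term `s = j - 1` alone yields `d₂ ≥ 2λy`. If `y ≥ 1/8`, then `λ ≤ 4 d₂`. If `y < 1/8`, then
`n < 2j`, so `d₁ = λ²`. In that case count the triples `(σ, α, β)`: given `U = α ∪ β` of size
`j + i`, the pair `(σ, α)` is determined by `σ` outside `U` and by three `i`-subsets recording
ranks, because two occurrences of the same pattern pin each other down. Summing over `i ≥ 1`, the
collision term is at most `8λy ≤ 4 d₂`.
-/

open scoped symmDiff

section Rank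

variable {γ δ : Type*} [LinearOrder γ] [LinearOrder δ]

/-- The rank of `x` relative to the finite set `S`, counted from `0`: the number of elements of `S`
below `x`. It is defined for every `x`, in `S` or not. -/
def rankIn (S : Finset γ) (x : γ) : ℕ := {y ∈ S | y < x}.card

/-- The set of ranks that the elements of `B` have in `S`: the way `B` is interleaved with the rest
of `S`, forgetting which elements these are. -/
def ranksIn (S B : Finset γ) : Finset ℕ := B.image (rankIn S)

lemma rankIn_lt_card {S : Finset γ} {x : γ} (hx : x ∈ S) : rankIn S x < S.card :=
  Finset.card_lt_card <| Finset.filter_ssubset.2 ⟨x, hx, lt_irrefl x⟩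

lemma strictMonoOn_rankIn (S : Finset γ) : StrictMonoOn (rankIn S) S := fun x hx y _ hxy ↦
  Finset.card_lt_card <| (Finset.ssubset_iff_of_subset <|
    Finset.monotone_filter_right S fun _ _ hz ↦ hz.trans hxy).2
    ⟨x, Finset.mem_filter.2 ⟨hx, hxy⟩, by simp⟩

lemma rankIn_union {S T : Finset γ} (h : Disjoint S T) (x : γ) :
    rankIn (S ∪ T) x = rankIn S x + rankIn T x := by
  rw [rankIn, Finset.filter_union, Finset.card_union_of_disjoint (Finset.disjoint_filter_filter h)]
  rfl

lemma rankIn_image {S : Finset γ} {g : γ → δ} (hg : StrictMonoOn g S) {x : γ} (hx : x ∈ S) :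
    rankIn (S.image g) (g x) = rankIn S x := by
  rw [rankIn, Finset.filter_image,
    Finset.card_image_of_injOn (hg.injOn.mono (Finset.filter_subset _ S))]
  exact congrArg Finset.card (Finset.filter_congr fun y hy ↦ hg.lt_iff_lt hy hx)

lemma rankIn_univ_fin {m : ℕ} (k : Fin m) : rankIn Finset.univ k = k := by
  have hfilter : Finset.univ.filter (· < k) = Finset.Iio k := by ext; simp
  rw [rankIn, hfilter, Fin.card_Iio]

lemma ranksIn_mem_powersetCard {S B : Finset γ} (h : B ⊆ S) :
    ranksIn S B ∈ (Finset.range S.card).powersetCard B.card := by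
  refine Finset.mem_powersetCard.2 ⟨Finset.image_subset_iff.2 fun x hx ↦ ?_, ?_⟩
  · exact Finset.mem_range.2 (rankIn_lt_card (h hx))
  · exact Finset.card_image_of_injOn ((strictMonoOn_rankIn S).injOn.mono h)

lemma rankIn_ranksIn {S B : Finset γ} (h : B ⊆ S) {x : γ} (hx : x ∈ B) :
    rankIn (ranksIn S B) (rankIn S x) = rankIn B x :=
  rankIn_image ((strictMonoOn_rankIn S).mono h) hx

lemma exists_rankIn_eq {S B S' B' : Finset γ} (hS : B ⊆ S) (hS' : B' ⊆ S')
    (h : ranksIn S B = ranksIn S' B') {x : γ} (hx : x ∈ B) :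
    ∃ y ∈ B', rankIn S' y = rankIn S x ∧ rankIn B' y = rankIn B x := by
  obtain ⟨y, hy, hyx⟩ := Finset.mem_image.1 (h ▸ Finset.mem_image_of_mem _ hx :
    rankIn S x ∈ ranksIn S' B')
  exact ⟨y, hy, hyx, by rw [← rankIn_ranksIn hS' hy, ← rankIn_ranksIn hS hx, h, hyx]⟩

lemma rankIn_eq_of_ranksIn_eq {S B S' B' : Finset γ} (hS : B ⊆ S) (hS' : B' ⊆ S')
    (h : ranksIn S B = ranksIn S' B') {x y : γ} (hx : x ∈ B) (hy : y ∈ B')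
    (hxy : rankIn B' y = rankIn B x) : rankIn S' y = rankIn S x := by
  obtain ⟨z, hz, hzx, hzB⟩ := exists_rankIn_eq hS hS' h hx
  rwa [(strictMonoOn_rankIn B').injOn hy hz (hxy.trans hzB.symm)]

lemma rankIn_union_add_rankIn_sdiff (α β : Finset γ) (x : γ) :
    rankIn (α ∪ β) x + rankIn (β \ α) x = rankIn β x + rankIn (α ∆ β) x := by
  rw [← Finset.sdiff_union_self_eq_union, rankIn_union Finset.sdiff_disjoint, symmDiff_def,
    Finset.sup_eq_union, rankIn_union disjoint_sdiff_sdiff]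
  ring

/- If `x` has rank `t` in `β \ α`, then its rank in `α ∪ β` is the sum of its ranks in `β` and in
`α ∆ β`, minus `t`. Hence the two sets of ranks locate every element of `β \ α`. -/
lemma mem_sdiff_of_ranksIn_eq {α β α' β' : Finset γ} (hunion : α ∪ β = α' ∪ β')
    (hβ : ranksIn β (β \ α) = ranksIn β' (β' \ α'))
    (hΔ : ranksIn (α ∆ β) (β \ α) = ranksIn (α' ∆ β') (β' \ α')) {x : γ} (hx : x ∈ β \ α) :
    x ∈ β' \ α' ∧ rankIn β x = rankIn β' x := by
  obtain ⟨y, hy, hyβ, hyB⟩ := exists_rankIn_eq Finset.sdiff_subset Finset.sdiff_subset hβ hx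
  have hyΔ : rankIn (α' ∆ β') y = rankIn (α ∆ β) x :=
    rankIn_eq_of_ranksIn_eq le_sup_right le_sup_right hΔ hx hy hyB
  have hxy_union : rankIn (α' ∪ β') x = rankIn (α' ∪ β') y := by
    have hx' := rankIn_union_add_rankIn_sdiff α β x
    have hy' := rankIn_union_add_rankIn_sdiff α' β' y
    rw [hunion] at hx'
    omega
  have hxy : x = y := (strictMonoOn_rankIn (α' ∪ β')).injOn
    (hunion ▸ Finset.mem_union_right α (Finset.sdiff_subset hx))
    (Finset.mem_union_right α' (Finset.sdiff_subset hy)) hxy_union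
  exact hxy ▸ ⟨hy, hxy ▸ hyβ.symm⟩

lemma sdiff_eq_of_ranksIn_eq {α β α' β' : Finset γ} (hunion : α ∪ β = α' ∪ β')
    (hβ : ranksIn β (β \ α) = ranksIn β' (β' \ α'))
    (hΔ : ranksIn (α ∆ β) (β \ α) = ranksIn (α' ∆ β') (β' \ α')) : β \ α = β' \ α' :=
  Finset.Subset.antisymm (fun _ hx ↦ (mem_sdiff_of_ranksIn_eq hunion hβ hΔ hx).1)
    fun _ hx ↦ (mem_sdiff_of_ranksIn_eq hunion.symm hβ.symm hΔ.symm hx).1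

lemma left_eq_of_ranksIn_eq {α β α' β' : Finset γ} (hunion : α ∪ β = α' ∪ β')
    (hβ : ranksIn β (β \ α) = ranksIn β' (β' \ α'))
    (hΔ : ranksIn (α ∆ β) (β \ α) = ranksIn (α' ∆ β') (β' \ α')) : α = α' := by
  have hleft (a b : Finset γ) : (a ∪ b) \ (b \ a) = a := by grind
  rw [← hleft α β, hunion, sdiff_eq_of_ranksIn_eq hunion hβ hΔ, hleft]

end Rank

section Occurrence

variable {m n : ℕ} {τ : Equiv.Perm (Fin m)} {σ σ' : Equiv.Perm (Fin n)}
  {α β α' β' U : Finset (Fin n)}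

lemma OccursOn.card_eq (h : OccursOn τ σ α) : α.card = m := by
  obtain ⟨f, hf, rfl, -⟩ := h
  rw [Finset.card_image_of_injective _ hf.injective, Finset.card_fin]

lemma OccursOn.exists_rankIn_eq (h : OccursOn τ σ α) {x : Fin n} (hx : x ∈ α) :
    ∃ k : Fin m, rankIn α x = k ∧ rankIn (α.image σ) (σ x) = τ k := by
  obtain ⟨f, hf, rfl, hτ⟩ := h
  obtain ⟨k, -, rfl⟩ := Finset.mem_image.1 hx
  have hvalues : StrictMono fun a ↦ σ (f (τ.symm a)) := fun a b hab ↦ (hτ _ _).2 (by simpa)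
  have himage : (Finset.univ.image f).image σ = Finset.univ.image fun a ↦ σ (f (τ.symm a)) := by
    rw [Finset.image_image]
    nth_rw 1 [← Finset.image_univ_equiv τ.symm]
    rw [Finset.image_image]
    rfl
  refine ⟨k, ?_, ?_⟩
  · rw [rankIn_image (hf.strictMonoOn _) (Finset.mem_univ k), rankIn_univ_fin]
  · rw [himage, ← rankIn_univ_fin (τ k), ← rankIn_image (hvalues.strictMonoOn _)
      (Finset.mem_univ (τ k)), Equiv.symm_apply_apply]

lemma OccursOn.rankIn_image_eq (h : OccursOn τ σ α) (h' : OccursOn τ σ' α') {x x' : Fin n}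
    (hx : x ∈ α) (hx' : x' ∈ α') (hxx' : rankIn α x = rankIn α' x') :
    rankIn (α.image σ) (σ x) = rankIn (α'.image σ') (σ' x') := by
  obtain ⟨k, hk, hτk⟩ := h.exists_rankIn_eq hx
  obtain ⟨k', hk', hτk'⟩ := h'.exists_rankIn_eq hx'
  have : k = k' := Fin.ext (by omega)
  rw [hτk, hτk', this]

lemma OccursOn.apply_eq (h : OccursOn τ σ α) (h' : OccursOn τ σ' α)
    (himage : α.image σ = α.image σ') {x : Fin n} (hx : x ∈ α) : σ x = σ' x := by
  have hrank := h.rankIn_image_eq h' hx hx rfl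
  rw [← himage] at hrank
  exact (strictMonoOn_rankIn _).injOn (Finset.mem_image_of_mem σ hx)
    (himage ▸ Finset.mem_image_of_mem σ' hx) hrank

lemma OccursOn.ranksIn_image_subset (h : OccursOn τ σ α) (h' : OccursOn τ σ' α')
    {B B' : Finset (Fin n)} (hB : B ⊆ α) (hB' : B' ⊆ α') (hranks : ranksIn α B = ranksIn α' B') :
    ranksIn (α.image σ) (B.image σ) ⊆ ranksIn (α'.image σ') (B'.image σ') := by
  intro r hr
  obtain ⟨x, hx, rfl⟩ : ∃ x ∈ B, rankIn (α.image σ) (σ x) = r := by simpa [ranksIn] using hr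
  obtain ⟨y, hy, hyx, -⟩ := _root_.exists_rankIn_eq hB hB' hranks hx
  rw [h.rankIn_image_eq h' (hB hx) (hB' hy) hyx.symm]
  exact Finset.mem_image_of_mem _ (Finset.mem_image_of_mem _ hy)

lemma OccursOn.ranksIn_image_eq (h : OccursOn τ σ α) (h' : OccursOn τ σ' α')
    {B B' : Finset (Fin n)} (hB : B ⊆ α) (hB' : B' ⊆ α') (hranks : ranksIn α B = ranksIn α' B') :
    ranksIn (α.image σ) (B.image σ) = ranksIn (α'.image σ') (B'.image σ') :=
  (h.ranksIn_image_subset h' hB hB' hranks).antisymm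
    (h'.ranksIn_image_subset h hB' hB hranks.symm)

lemma image_eq_of_forall_notMem_eq (h : ∀ x ∉ U, σ x = σ' x) : U.image σ = U.image σ' := by
  apply Finset.coe_injective
  rw [Finset.coe_image, Finset.coe_image, ← compl_inj_iff, ← Set.image_compl_eq σ.bijective,
    ← Set.image_compl_eq σ'.bijective]
  exact Set.image_congr fun x hx ↦ h x (by simpa using hx)

/-- How two occurrences `α` and `β` overlap: the ranks of the elements of `β \ α` among the
positions of `β` and among those of `α ∆ β`, and the ranks of their values among the values on
`α ∆ β`. -/
def overlapCode (σ : Equiv.Perm (Fin n)) (α β : Finset (Fin n)) :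
    Finset ℕ × Finset ℕ × Finset ℕ :=
  (ranksIn β (β \ α), ranksIn (α ∆ β) (β \ α),
    ranksIn ((α ∆ β).image σ) ((β \ α).image σ))

/-- The possible overlap codes of two occurrences of a pattern of length `m` whose union has `m + i`
elements. -/
def overlapCodes (m i : ℕ) : Finset (Finset ℕ × Finset ℕ × Finset ℕ) :=
  (Finset.range m).powersetCard i ×ˢ (Finset.range (2 * i)).powersetCard i ×ˢ
    (Finset.range (2 * i)).powersetCard i

lemma card_overlapCodes (m i : ℕ) :
    (overlapCodes m i).card = m.choose i * i.centralBinom ^ 2 := by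
  rw [overlapCodes, Finset.card_product, Finset.card_product, Finset.card_powersetCard,
    Finset.card_powersetCard, Finset.card_range, Finset.card_range, Nat.centralBinom, sq]

lemma overlapCode_mem_overlapCodes {i : ℕ} (hα : α.card = m) (hβ : β.card = m)
    (hunion : (α ∪ β).card = m + i) : overlapCode σ α β ∈ overlapCodes m i := by
  have hsdiff : (β \ α).card = i := by
    have := Finset.card_sdiff_add_card β α
    rw [Finset.union_comm, hunion] at this
    omega
  have hsymmDiff : (α ∆ β).card = 2 * i := by
    have := Finset.card_sdiff_add_card α β
    rw [symmDiff_def, Finset.sup_eq_union, Finset.card_union_of_disjoint disjoint_sdiff_sdiff]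
    omega
  have hsubset : β \ α ⊆ α ∆ β := le_sup_right
  have hpos := ranksIn_mem_powersetCard hsubset
  have hval := ranksIn_mem_powersetCard (Finset.image_subset_image (f := σ) hsubset)
  rw [Finset.card_image_of_injective _ σ.injective,
    Finset.card_image_of_injective _ σ.injective] at hval
  rw [hsdiff, hsymmDiff] at hpos hval
  have hranks := ranksIn_mem_powersetCard (Finset.sdiff_subset : β \ α ⊆ β)
  rw [hsdiff, hβ] at hranks
  exact Finset.mk_mem_product hranks (Finset.mk_mem_product hpos hval)

lemma eq_of_overlapCode_eq (hα : OccursOn τ σ α) (hβ : OccursOn τ σ β) (hα' : OccursOn τ σ' α')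
    (hβ' : OccursOn τ σ' β') (hunion : α ∪ β = α' ∪ β') (houtside : ∀ x ∉ α ∪ β, σ x = σ' x)
    (hcode : overlapCode σ α β = overlapCode σ' α' β') : σ = σ' ∧ α = α' := by
  simp only [overlapCode, Prod.mk.injEq] at hcode
  obtain ⟨hranks, hpos, hval⟩ := hcode
  obtain rfl : α = α' := left_eq_of_ranksIn_eq hunion hranks hpos
  refine ⟨Equiv.ext fun x ↦ ?_, rfl⟩
  have hunion_image : α.image σ ∪ β.image σ = α.image σ' ∪ β'.image σ' := by
    rw [← Finset.image_union, ← Finset.image_union, ← hunion,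
      image_eq_of_forall_notMem_eq houtside]
  have hranks_image : ranksIn (β.image σ) (β.image σ \ α.image σ) =
      ranksIn (β'.image σ') (β'.image σ' \ α.image σ') := by
    rw [← Finset.image_sdiff _ _ σ.injective, ← Finset.image_sdiff _ _ σ'.injective]
    exact hβ.ranksIn_image_eq hβ' Finset.sdiff_subset Finset.sdiff_subset hranks
  rw [Finset.image_symmDiff _ _ σ.injective, Finset.image_symmDiff _ _ σ'.injective,
    Finset.image_sdiff _ _ σ.injective, Finset.image_sdiff _ _ σ'.injective] at hval
  by_cases hxα : x ∈ α
  · exact hα.apply_eq hα' (left_eq_of_ranksIn_eq hunion_image hranks_image hval) hxα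
  by_cases hxβ : x ∈ β
  · obtain ⟨hxβ', hrank⟩ := mem_sdiff_of_ranksIn_eq hunion hranks hpos
      (Finset.mem_sdiff.2 ⟨hxβ, hxα⟩)
    obtain ⟨hσ'x, hrank'⟩ := mem_sdiff_of_ranksIn_eq hunion_image.symm hranks_image.symm hval.symm
      (x := σ' x) (by simpa using hxβ')
    exact (strictMonoOn_rankIn (β.image σ)).injOn (Finset.mem_image_of_mem σ hxβ)
      (Finset.sdiff_subset hσ'x) ((hβ.rankIn_image_eq hβ' hxβ (Finset.sdiff_subset hxβ')
        hrank).trans hrank')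
  · exact houtside x (by simp [hxα, hxβ])

end Occurrence

section Counting

variable {m n : ℕ}

/-- The pairs `(σ, α)` such that `α` is an occurrence of `τ` in `σ` and together with another
occurrence, or with itself, it covers exactly `U`. -/
def overlappingOccurrences (τ : Equiv.Perm (Fin m)) (U : Finset (Fin n)) :
    Finset (Equiv.Perm (Fin n) × Finset (Fin n)) :=
  {q | OccursOn τ q.1 q.2 ∧ ∃ β, OccursOn τ q.1 β ∧ q.2 ∪ β = U}

lemma card_overlappingOccurrences_le {i : ℕ} (τ : Equiv.Perm (Fin m)) {U : Finset (Fin n)}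
    (hU : U.card = m + i) : (overlappingOccurrences τ U).card ≤
      m.choose i * i.centralBinom ^ 2 * n.descFactorial (n - (m + i)) := by
  let codes := overlapCodes m i ×ˢ (Finset.univ : Finset ({x // x ∉ U} ↪ Fin n))
  have hcodes : codes.card =
      m.choose i * i.centralBinom ^ 2 * n.descFactorial (n - (m + i)) := by
    rw [Finset.card_product, card_overlapCodes, Finset.card_univ, Fintype.card_embedding_eq,
      Fintype.card_subtype_compl, Fintype.card_coe, Fintype.card_fin, hU]
  rw [← hcodes]
  refine Finset.card_le_card_of_forall_subsingleton (fun q c ↦ ∃ β, OccursOn τ q.1 β ∧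
    q.2 ∪ β = U ∧ c = (overlapCode q.1 q.2 β, (Function.Embedding.subtype _).trans
      q.1.toEmbedding)) ?_ ?_
  · rintro ⟨σ, α⟩ hq
    obtain ⟨hα, β, hβ, hunion⟩ := (Finset.mem_filter.1 hq).2
    have hmem := overlapCode_mem_overlapCodes (σ := σ) hα.card_eq hβ.card_eq (hunion ▸ hU)
    exact ⟨_, Finset.mk_mem_product hmem (Finset.mem_univ _), β, hβ, hunion, rfl⟩
  · rintro c - ⟨σ, α⟩ ⟨hq, β, hβ, hunion, rfl⟩ ⟨σ', α'⟩ ⟨hq', β', hβ', hunion', hc⟩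
    obtain ⟨hcode, hrestrict⟩ := Prod.mk.inj hc
    obtain ⟨rfl, rfl⟩ := eq_of_overlapCode_eq (Finset.mem_filter.1 hq).2.1 hβ
      (Finset.mem_filter.1 hq').2.1 hβ' (hunion.trans hunion'.symm)
      (fun x hx ↦ DFunLike.congr_fun hrestrict ⟨x, hunion ▸ hx⟩) hcode
    rfl

/-- The pairs `(σ, α)` such that `α` is one of at least two occurrences of `τ` in `σ`. -/
def multipleOccurrences (τ : Equiv.Perm (Fin m)) (n : ℕ) :
    Finset (Equiv.Perm (Fin n) × Finset (Fin n)) :=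
  {q | OccursOn τ q.1 q.2 ∧ ∃ β, β ≠ q.2 ∧ OccursOn τ q.1 β}

lemma multipleOccurrences_subset (τ : Equiv.Perm (Fin m)) (n : ℕ) :
    multipleOccurrences τ n ⊆ (Finset.Icc 1 (n - m)).biUnion fun i ↦
      (Finset.univ.powersetCard (m + i)).biUnion (overlappingOccurrences τ) := by
  rintro ⟨σ, α⟩ hq
  obtain ⟨hα, β, hβα, hβ⟩ := (Finset.mem_filter.1 hq).2
  have hm : m < (α ∪ β).card := by
    have hnot_subset : ¬ β ⊆ α := fun h ↦
      hβα (Finset.eq_of_subset_of_card_le h (hα.card_eq.trans hβ.card_eq.symm).le)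
    simpa [hα.card_eq] using Finset.card_lt_card (left_lt_sup.2 hnot_subset)
  have hn : (α ∪ β).card ≤ n := card_finset_fin_le _
  refine Finset.mem_biUnion.2 ⟨(α ∪ β).card - m, Finset.mem_Icc.2 (by omega),
    Finset.mem_biUnion.2 ⟨α ∪ β, Finset.mem_powersetCard_univ.2 (by omega), ?_⟩⟩
  exact Finset.mem_filter.2 ⟨Finset.mem_univ _, hα, β, hβ, rfl⟩

lemma card_multipleOccurrences_le (τ : Equiv.Perm (Fin m)) (n : ℕ) :
    (multipleOccurrences τ n).card ≤ ∑ i ∈ Finset.Icc 1 (n - m), n.choose (m + i) *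
      (m.choose i * i.centralBinom ^ 2 * n.descFactorial (n - (m + i))) := by
  refine (Finset.card_le_card (multipleOccurrences_subset τ n)).trans <|
    Finset.card_biUnion_le.trans <| Finset.sum_le_sum fun i _ ↦ ?_
  refine (Finset.card_biUnion_le_card_mul _ _ _ fun U hU ↦
    card_overlappingOccurrences_le τ (Finset.mem_powersetCard_univ.1 hU)).trans_eq ?_
  rw [Finset.card_powersetCard, Finset.card_fin]

lemma sum_ncard_multiple_le (τ : Equiv.Perm (Fin m)) (n : ℕ) :
    ∑ α : {α : Finset (Fin n) // α.card = m}, Set.ncard {σ : Equiv.Perm (Fin n) |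
      OccursOn τ σ α.1 ∧ ∃ β : {α : Finset (Fin n) // α.card = m}, β ≠ α ∧ OccursOn τ σ β.1} ≤
    (multipleOccurrences τ n).card := by
  simp only [Set.ncard_eq_toFinset_card']
  rw [← Finset.card_sigma]
  refine Finset.card_le_card_of_injOn (fun s ↦ (s.2, s.1.1)) ?_ ?_
  · rintro ⟨α, σ⟩ h
    obtain ⟨hα, β, hβα, hβ⟩ := Set.mem_toFinset.1 (Finset.mem_sigma.1 h).2
    exact Finset.mem_filter.2 ⟨Finset.mem_univ _, hα, β.1, fun h ↦ hβα (Subtype.ext h), hβ⟩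
  · rintro ⟨⟨α, _⟩, σ⟩ _ ⟨⟨β, _⟩, ρ⟩ _ h
    obtain ⟨rfl, rfl⟩ := Prod.mk.inj h
    rfl

end Counting

section Duplication

variable {j : ℕ} (τ : Equiv.Perm (Fin j))

/-- The permutation obtained from `τ` by inserting the value `v` at the position `p`, where the
existing positions and values that are at least `p` and `v` move up by one. -/
def insertPoint (p v : Fin (j + 1)) : Equiv.Perm (Fin (j + 1)) :=
  (finSuccEquiv' p).trans ((Equiv.optionCongr τ).trans (finSuccEquiv' v).symm)

@[simp]
lemma insertPoint_self (p v : Fin (j + 1)) : insertPoint τ p v p = v := by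
  simp [insertPoint]

@[simp]
lemma insertPoint_succAbove (p v : Fin (j + 1)) (k : Fin j) :
    insertPoint τ p v (p.succAbove k) = v.succAbove (τ k) := by
  simp [insertPoint]

lemma occursOn_insertPoint (p v : Fin (j + 1)) : OccursOn τ (insertPoint τ p v) {p}ᶜ :=
  ⟨p.succAbove, Fin.strictMono_succAbove p, Fin.image_succAbove_univ p, fun k l ↦ by
    rw [insertPoint_succAbove, insertPoint_succAbove, Fin.succAbove_lt_succAbove_iff]⟩

lemma succAbove_succ_of_ne {k i : Fin j} (h : k ≠ i) :
    i.succ.succAbove k = i.castSucc.succAbove k := by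
  rcases h.lt_or_gt with h | h
  · rw [Fin.succAbove_succ_of_le _ _ h.le, Fin.succAbove_castSucc_of_lt _ _ h]
  · rw [Fin.succAbove_succ_of_lt _ _ h, Fin.succAbove_castSucc_of_le _ _ h.le]

lemma insertPoint_succ_eq_insertPoint_castSucc {i : Fin j} {v w : Fin (j + 1)}
    (hv : w.succAbove (τ i) = v) (hw : v.succAbove (τ i) = w)
    (hvw : ∀ a ≠ τ i, v.succAbove a = w.succAbove a) :
    insertPoint τ i.succ v = insertPoint τ i.castSucc w := by
  ext1 x
  obtain rfl | ⟨k, rfl⟩ := Fin.eq_self_or_eq_succAbove i.succ x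
  · rw [insertPoint_self, ← Fin.succAbove_castSucc_self, insertPoint_succAbove, hv]
  rw [insertPoint_succAbove]
  by_cases hk : k = i
  · rw [hk, Fin.succAbove_succ_self, insertPoint_self, hw]
  · rw [succAbove_succ_of_ne hk, insertPoint_succAbove, hvw _ (by simpa using hk)]

lemma insertPoint_succ_succ (i : Fin j) :
    insertPoint τ i.succ (τ i).succ = insertPoint τ i.castSucc (τ i).castSucc :=
  insertPoint_succ_eq_insertPoint_castSucc τ (Fin.succAbove_castSucc_self _)
    (Fin.succAbove_succ_self _) fun _ ↦ succAbove_succ_of_ne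

lemma insertPoint_succ_castSucc (i : Fin j) :
    insertPoint τ i.succ (τ i).castSucc = insertPoint τ i.castSucc (τ i).succ :=
  insertPoint_succ_eq_insertPoint_castSucc τ (Fin.succAbove_succ_self _)
    (Fin.succAbove_castSucc_self _) fun _ h ↦ (succAbove_succ_of_ne h).symm

/-- The permutation obtained from `τ` by doubling its point at position `i`: the new point is
inserted to the right of it, just below it in value if the point at `i` directly succeeds, both in
position and in value, another point of `τ`, and just above it otherwise. -/
def duplicate (i : Fin j) : Equiv.Perm (Fin (j + 1)) :=
  insertPoint τ i.succ (if ∃ d, d ⋖ i ∧ τ d ⋖ τ i then (τ i).castSucc else (τ i).succ)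

lemma duplicate_eq_insertPoint_castSucc (i : Fin j) : duplicate τ i =
    insertPoint τ i.castSucc (if ∃ d, d ⋖ i ∧ τ d ⋖ τ i then (τ i).succ else (τ i).castSucc) := by
  rw [duplicate]
  split_ifs
  · exact insertPoint_succ_castSucc τ i
  · exact insertPoint_succ_succ τ i

lemma castSucc_covBy_succ (a : Fin j) : a.castSucc ⋖ a.succ := by
  simp [Fin.covBy_iff]

/- Deleting position `i` recovers `τ` and moves the doubled pair at `c` to the positions `d`, `c`.
So `τ d` and `τ c` are adjacent, in the order excluded by the choice made at `c`. -/
lemma duplicate_ne_duplicate {i c : Fin j} (hic : i < c) : duplicate τ i ≠ duplicate τ c := by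
  intro h
  obtain ⟨d, hid, hdc⟩ := exists_le_covBy_of_lt hic
  have hdeleted_d : i.castSucc.succAbove d = c.castSucc := by
    rw [Fin.succAbove_castSucc_of_le _ _ hid]
    exact Fin.ext (Nat.covBy_iff_add_one_eq.1 (Fin.covBy_iff.1 hdc))
  have hdeleted_c : i.castSucc.succAbove c = c.succ := Fin.succAbove_castSucc_of_le _ _ hic.le
  rw [duplicate_eq_insertPoint_castSucc τ i] at h
  generalize (if ∃ d, d ⋖ i ∧ τ d ⋖ τ i then (τ i).succ else (τ i).castSucc) = w at h
  have hvalue_d : w.succAbove (τ d) = duplicate τ c c.castSucc := by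
    rw [← h, ← hdeleted_d, insertPoint_succAbove]
  have hvalue_c : w.succAbove (τ c) = duplicate τ c c.succ := by
    rw [← h, ← hdeleted_c, insertPoint_succAbove]
  rw [duplicate_eq_insertPoint_castSucc, insertPoint_self] at hvalue_d
  rw [duplicate, insertPoint_self] at hvalue_c
  split_ifs at hvalue_c hvalue_d with hpred
  · have hcd : τ c ⋖ τ d := CovBy.of_image (Fin.succAboveOrderEmb w) <| by
      simpa only [Fin.succAboveOrderEmb_apply, hvalue_c, hvalue_d] using castSucc_covBy_succ (τ c)
    obtain ⟨e, hec, hτec⟩ := hpred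
    exact lt_asymm hcd.lt (hdc.unique_left hec ▸ hτec.lt)
  · have hdc' : τ d ⋖ τ c := CovBy.of_image (Fin.succAboveOrderEmb w) <| by
      simpa only [Fin.succAboveOrderEmb_apply, hvalue_c, hvalue_d] using castSucc_covBy_succ (τ c)
    exact hpred ⟨d, hdc, hdc'⟩

lemma duplicate_injective : Function.Injective (duplicate τ) := fun i c h ↦ by
  by_contra hic
  rcases lt_or_gt_of_ne hic with hic | hic
  · exact duplicate_ne_duplicate τ hic h
  · exact duplicate_ne_duplicate τ hic h.symm

lemma overlapCount_eq {N s : ℕ} (hN : 2 * j - s = N) : overlapCount τ s =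
    Set.ncard {ρ : Equiv.Perm (Fin N) | ∃ α β : Finset (Fin N), α.card = j ∧ β.card = j ∧
      (α ∩ β).card = s ∧ OccursOn τ ρ α ∧ OccursOn τ ρ β} := by
  subst hN
  rfl

lemma le_overlapCount_sub_one : j ≤ overlapCount τ (j - 1) := by
  rcases Nat.eq_zero_or_pos j with rfl | hj
  · exact Nat.zero_le _
  rw [overlapCount_eq τ (show 2 * j - (j - 1) = j + 1 by omega)]
  calc j = (Set.range (duplicate τ)).ncard := by
        rw [← Set.image_univ, Set.ncard_image_of_injective _ (duplicate_injective τ),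
          Set.ncard_univ, Nat.card_fin]
    _ ≤ _ := Set.ncard_le_ncard ?_
  rintro _ ⟨i, rfl⟩
  have hright : OccursOn τ (duplicate τ i) {i.succ}ᶜ := occursOn_insertPoint τ _ _
  have hleft : OccursOn τ (duplicate τ i) {i.castSucc}ᶜ :=
    duplicate_eq_insertPoint_castSucc τ i ▸ occursOn_insertPoint τ _ _
  refine ⟨_, _, hright.card_eq, hleft.card_eq, ?_, hright, hleft⟩
  rw [← Finset.compl_union, Finset.card_compl, Finset.singleton_union, Fintype.card_fin,
    Finset.card_pair (castSucc_covBy_succ i).ne']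
  rfl

end Duplication

section Estimates

/-- The ratio that governs overlapping occurrences: `C(n, j) / j! * overlapRatio n j` is
`j * C(n, j + 1) / (j + 1)!`, and each further point of a second occurrence outside the first one
costs at most a factor `overlapRatio n j`, up to factors depending only on the number of such
points. -/
def overlapRatio (n j : ℕ) : ℝ := ((n - j : ℕ) * j : ℝ) / (j + 1) ^ 2

lemma overlapRatio_nonneg (n j : ℕ) : 0 ≤ overlapRatio n j := by
  unfold overlapRatio
  positivity

lemma cast_factorial_succ (i : ℕ) : ((i + 1).factorial : ℝ) = (i + 1) * i.factorial := by
  rw [Nat.factorial_succ]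
  push_cast
  rfl

lemma choose_succ_eq_div (n k : ℕ) :
    (n.choose (k + 1) : ℝ) = n.choose k * (n - k : ℕ) / (k + 1) := by
  rw [eq_div_iff (by positivity)]
  exact_mod_cast Nat.choose_succ_right_eq n k

lemma choose_div_factorial_mul_overlapRatio (n j : ℕ) :
    (n.choose j : ℝ) / j.factorial * overlapRatio n j =
      j * n.choose (j + 1) / (j + 1).factorial := by
  rw [overlapRatio, choose_succ_eq_div, cast_factorial_succ]
  field_simp

lemma sub_mul_sub_div_le_overlapRatio (n j i : ℕ) :
    ((n - (j + i) : ℕ) * (j - i : ℕ) : ℝ) / (j + i + 1) ^ 2 ≤ overlapRatio n j := by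
  rw [overlapRatio]
  gcongr ?_ * ?_ / ?_ ^ 2
  · exact_mod_cast (by omega : n - (j + i) ≤ n - j)
  · exact_mod_cast Nat.sub_le j i
  · linarith [(Nat.cast_nonneg i : (0 : ℝ) ≤ i)]

lemma choose_mul_choose_div_factorial_le (n j i : ℕ) :
    (n.choose (j + i) : ℝ) * j.choose i / (j + i).factorial ≤
      n.choose j / j.factorial * (overlapRatio n j ^ i / i.factorial) := by
  induction i with
  | zero => simp
  | succ i ih =>
    calc (n.choose (j + (i + 1)) : ℝ) * j.choose (i + 1) / (j + (i + 1)).factorial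
        = n.choose (j + i) * j.choose i / (j + i).factorial *
            (((n - (j + i) : ℕ) * (j - i : ℕ) : ℝ) / (j + i + 1) ^ 2 / (i + 1)) := by
          rw [← add_assoc, cast_factorial_succ, choose_succ_eq_div, choose_succ_eq_div]
          push_cast
          field_simp
      _ ≤ n.choose j / j.factorial * (overlapRatio n j ^ i / i.factorial) *
            (overlapRatio n j / (i + 1)) := by
          gcongr
          · exact mul_nonneg (by positivity)
              (div_nonneg (pow_nonneg (overlapRatio_nonneg n j) i) (by positivity))
          · exact sub_mul_sub_div_le_overlapRatio n j i
      _ = _ := by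
          rw [cast_factorial_succ, pow_succ]
          field_simp

/-- The terms of the series `∑ C(2i, i)² yⁱ / i!` at the threshold `y = 1/8`. -/
def thresholdTerm (i : ℕ) : ℝ := (i.centralBinom : ℝ) ^ 2 / (i.factorial * 8 ^ i)

lemma thresholdTerm_nonneg (i : ℕ) : 0 ≤ thresholdTerm i := by
  unfold thresholdTerm
  positivity

lemma centralBinom_succ_le (i : ℕ) : (i + 1).centralBinom ≤ 4 * i.centralBinom := by
  have h := Nat.succ_mul_centralBinom_succ i
  refine Nat.le_of_mul_le_mul_left ?_ i.succ_pos
  calc (i + 1) * (i + 1).centralBinom = 2 * (2 * i + 1) * i.centralBinom := h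
    _ ≤ (i + 1) * (4 * i.centralBinom) := by nlinarith

lemma thresholdTerm_succ_le {i : ℕ} (hi : 3 ≤ i) : thresholdTerm (i + 1) ≤ thresholdTerm i / 2 := by
  have hcentral : ((i + 1).centralBinom : ℝ) ≤ 4 * i.centralBinom := by
    exact_mod_cast centralBinom_succ_le i
  have hi' : (4 : ℝ) ≤ i + 1 := by exact_mod_cast Nat.succ_le_succ hi
  calc thresholdTerm (i + 1)
      = ((i + 1).centralBinom : ℝ) ^ 2 / ((i + 1) * i.factorial * 8 ^ (i + 1)) := by
        rw [thresholdTerm, cast_factorial_succ]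
    _ ≤ (4 * i.centralBinom : ℝ) ^ 2 / (4 * i.factorial * 8 ^ (i + 1)) := by gcongr
    _ = thresholdTerm i / 2 := by
        rw [thresholdTerm]
        field_simp
        ring

lemma sum_thresholdTerm_add_le_one (K : ℕ) :
    ∑ i ∈ Finset.Icc 1 (K + 5), thresholdTerm i + thresholdTerm (K + 5) ≤ 1 := by
  induction K with
  | zero =>
    have hIcc : Finset.Icc 1 5 = {1, 2, 3, 4, 5} := rfl
    norm_num [hIcc, thresholdTerm, Nat.centralBinom, Nat.choose, Nat.factorial]
  | succ K ih =>
    rw [show K + 1 + 5 = K + 5 + 1 by ring, Finset.sum_Icc_succ_top (by omega)]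
    linarith [thresholdTerm_succ_le (show 3 ≤ K + 5 by omega)]

lemma sum_thresholdTerm_le_one (K : ℕ) : ∑ i ∈ Finset.Icc 1 K, thresholdTerm i ≤ 1 :=
  calc ∑ i ∈ Finset.Icc 1 K, thresholdTerm i ≤ ∑ i ∈ Finset.Icc 1 (K + 5), thresholdTerm i :=
        Finset.sum_le_sum_of_subset_of_nonneg (Finset.Icc_subset_Icc_right (by omega))
          fun i _ _ ↦ thresholdTerm_nonneg i
    _ ≤ 1 := by linarith [sum_thresholdTerm_add_le_one K, thresholdTerm_nonneg (K + 5)]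

lemma pow_le_eight_mul_div {y : ℝ} (hy : 0 ≤ y) (hy8 : y ≤ 1 / 8) {i : ℕ} (hi : 1 ≤ i) :
    y ^ i ≤ 8 * y / 8 ^ i := by
  obtain ⟨l, rfl⟩ := Nat.exists_eq_add_of_le' hi
  calc y ^ (l + 1) = y ^ l * y := pow_succ y l
    _ ≤ (1 / 8) ^ l * y := by gcongr
    _ = 8 * y / 8 ^ (l + 1) := by
        rw [one_div, inv_pow, pow_succ]
        field_simp

lemma sum_pow_div_factorial_mul_centralBinom_sq_le (K : ℕ) {y : ℝ} (hy : 0 ≤ y)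
    (hy8 : y ≤ 1 / 8) :
    ∑ i ∈ Finset.Icc 1 K, y ^ i / i.factorial * (i.centralBinom : ℝ) ^ 2 ≤ 8 * y :=
  calc ∑ i ∈ Finset.Icc 1 K, y ^ i / i.factorial * (i.centralBinom : ℝ) ^ 2
      ≤ ∑ i ∈ Finset.Icc 1 K, 8 * y * thresholdTerm i := by
        refine Finset.sum_le_sum fun i hi ↦ ?_
        calc y ^ i / i.factorial * (i.centralBinom : ℝ) ^ 2
            ≤ 8 * y / 8 ^ i / i.factorial * (i.centralBinom : ℝ) ^ 2 := by
              gcongr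
              exact pow_le_eight_mul_div hy hy8 (Finset.mem_Icc.1 hi).1
          _ = 8 * y * thresholdTerm i := by
              rw [thresholdTerm]
              field_simp
    _ = 8 * y * ∑ i ∈ Finset.Icc 1 K, thresholdTerm i := by rw [Finset.mul_sum]
    _ ≤ 8 * y := mul_le_of_le_one_right (by positivity) (sum_thresholdTerm_le_one K)

lemma descFactorial_div_factorial {n k : ℕ} (hk : k ≤ n) :
    (n.descFactorial (n - k) : ℝ) / n.factorial = 1 / k.factorial := by
  have h := Nat.factorial_mul_descFactorial (Nat.sub_le n k)
  rw [Nat.sub_sub_self hk] at h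
  rw [div_eq_div_iff (by positivity) (by positivity), one_mul, mul_comm]
  exact_mod_cast h

lemma overlap_term_le {n j i : ℕ} (hi : j + i ≤ n) :
    (n.choose (j + i) : ℝ) * (j.choose i * (i.centralBinom : ℝ) ^ 2 *
        n.descFactorial (n - (j + i))) / n.factorial ≤
      (n.choose j : ℝ) / j.factorial *
        (overlapRatio n j ^ i / i.factorial * (i.centralBinom : ℝ) ^ 2) :=
  calc (n.choose (j + i) : ℝ) * (j.choose i * (i.centralBinom : ℝ) ^ 2 *
        n.descFactorial (n - (j + i))) / n.factorial
      = (n.choose (j + i) : ℝ) * j.choose i * (i.centralBinom : ℝ) ^ 2 *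
          (n.descFactorial (n - (j + i)) / n.factorial) := by ring
    _ = (n.choose (j + i) : ℝ) * j.choose i / (j + i).factorial *
          (i.centralBinom : ℝ) ^ 2 := by
        rw [descFactorial_div_factorial hi]
        ring
    _ ≤ (n.choose j : ℝ) / j.factorial * (overlapRatio n j ^ i / i.factorial) *
          (i.centralBinom : ℝ) ^ 2 := by
        gcongr
        exact choose_mul_choose_div_factorial_le n j i
    _ = _ := by ring

lemma sum_overlap_term_le (n j : ℕ) (hy : overlapRatio n j ≤ 1 / 8) :
    ∑ i ∈ Finset.Icc 1 (n - j), (n.choose (j + i) : ℝ) * (j.choose i *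
        (i.centralBinom : ℝ) ^ 2 * n.descFactorial (n - (j + i))) / n.factorial ≤
      8 * ((n.choose j : ℝ) / j.factorial * overlapRatio n j) :=
  calc _ ≤ ∑ i ∈ Finset.Icc 1 (n - j), (n.choose j : ℝ) / j.factorial *
          (overlapRatio n j ^ i / i.factorial * (i.centralBinom : ℝ) ^ 2) := by
        refine Finset.sum_le_sum fun i hi ↦ overlap_term_le ?_
        have := Finset.mem_Icc.1 hi
        omega
    _ ≤ (n.choose j : ℝ) / j.factorial * (8 * overlapRatio n j) := by
        rw [← Finset.mul_sum]
        gcongr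
        exact sum_pow_div_factorial_mul_centralBinom_sq_le _ (overlapRatio_nonneg n j) hy
    _ = _ := by ring

lemma two_mul_overlapRatio_le_sum_overlapCount {n j : ℕ} (hj : 2 ≤ j) (τ : Equiv.Perm (Fin j)) :
    2 * (n.choose j / j.factorial * overlapRatio n j) ≤ ∑ s ∈ Finset.Icc 1 (j - 1),
      (n.choose (2 * j - s) : ℝ) * 2 * overlapCount τ s / (2 * j - s).factorial :=
  calc 2 * (n.choose j / j.factorial * overlapRatio n j)
      = (n.choose (j + 1) : ℝ) * 2 * j / (j + 1).factorial := by
        rw [choose_div_factorial_mul_overlapRatio]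
        ring
    _ ≤ (n.choose (j + 1) : ℝ) * 2 * overlapCount τ (j - 1) / (j + 1).factorial := by
        gcongr
        exact le_overlapCount_sub_one τ
    _ = (n.choose (2 * j - (j - 1)) : ℝ) * 2 * overlapCount τ (j - 1) /
          (2 * j - (j - 1)).factorial := by
        rw [show 2 * j - (j - 1) = j + 1 by omega]
    _ ≤ _ := Finset.single_le_sum
        (f := fun s ↦ (n.choose (2 * j - s) : ℝ) * 2 * overlapCount τ s / (2 * j - s).factorial)
        (fun s _ ↦ by positivity) (Finset.mem_Icc.2 (by omega))

end Estimates

section TotalVariation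

lemma half_sum_abs_sub_le {ι : Type*} [Fintype ι] {P Q : ι → ℝ} (hP₀ : ∀ x, 0 ≤ P x)
    (hQ₀ : ∀ x, 0 ≤ Q x) (hP : ∑ x, P x = 1) (hQ : ∑ x, Q x = 1) (S : Finset ι) :
    (1 / 2) * ∑ x, |P x - Q x| ≤ 1 - ∑ x ∈ S, min (P x) (Q x) := by
  have habs (a b : ℝ) : |a - b| = a + b - 2 * min a b := by
    linarith [max_sub_min_eq_abs' a b, min_add_max a b]
  have hmin : ∑ x ∈ S, min (P x) (Q x) ≤ ∑ x, min (P x) (Q x) :=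
    Finset.sum_le_univ_sum_of_nonneg fun x ↦ le_min (hP₀ x) (hQ₀ x)
  simp only [habs, Finset.sum_sub_distrib, Finset.sum_add_distrib, ← Finset.mul_sum, hP, hQ]
  linarith

lemma one_sub_sum_le_prod_one_sub {ι : Type*} (S : Finset ι) {p : ι → ℝ} (h₀ : ∀ i, 0 ≤ p i)
    (h₁ : ∀ i, p i ≤ 1) : 1 - ∑ i ∈ S, p i ≤ ∏ i ∈ S, (1 - p i) := by
  induction S using Finset.induction_on with
  | empty => simp
  | insert a S ha ih =>
    rw [Finset.sum_insert ha, Finset.prod_insert ha]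
    have hsum : 0 ≤ p a * ∑ i ∈ S, p i := mul_nonneg (h₀ a) (Finset.sum_nonneg fun i _ ↦ h₀ i)
    calc 1 - (p a + ∑ i ∈ S, p i) ≤ (1 - p a) * (1 - ∑ i ∈ S, p i) := by linarith
      _ ≤ (1 - p a) * ∏ i ∈ S, (1 - p i) :=
        mul_le_mul_of_nonneg_left ih (sub_nonneg.2 (h₁ a))

variable {n : ℕ}

lemma unifProb_nonneg (E : Set (Equiv.Perm (Fin n))) : 0 ≤ unifProb E := by
  unfold unifProb
  positivity

lemma unifProb_univ : unifProb (Set.univ : Set (Equiv.Perm (Fin n))) = 1 := by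
  rw [unifProb, Set.ncard_univ, Nat.card_perm, Nat.card_fin]
  exact div_self (by positivity)

lemma unifProb_mono {E F : Set (Equiv.Perm (Fin n))} (h : E ⊆ F) : unifProb E ≤ unifProb F := by
  unfold unifProb
  have := Set.ncard_le_ncard h
  gcongr

lemma unifProb_le_add {E F G : Set (Equiv.Perm (Fin n))} (h : E ⊆ F ∪ G) :
    unifProb E ≤ unifProb F + unifProb G := by
  rw [unifProb, unifProb, unifProb, ← add_div]
  gcongr
  exact_mod_cast (Set.ncard_le_ncard h).trans (Set.ncard_union_le F G)

variable {I : Type*} {X : Equiv.Perm (Fin n) → I → Prop} {p : I → ℝ}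

/-- The probability that the family of events `X` has the truth values `x`. -/
def familyProb (X : Equiv.Perm (Fin n) → I → Prop) (x : I → Bool) : ℝ :=
  unifProb {σ | ∀ α, X σ α ↔ x α = true}

lemma marginal_nonneg (hp : ∀ α, p α = unifProb {σ | X σ α}) (α : I) : 0 ≤ p α :=
  hp α ▸ unifProb_nonneg _

lemma marginal_le_one (hp : ∀ α, p α = unifProb {σ | X σ α}) (α : I) : p α ≤ 1 :=
  (hp α).trans_le ((unifProb_mono (Set.subset_univ _)).trans_eq unifProb_univ)

/-- The configuration in which only `α` occurs. -/
def onlyAt [DecidableEq I] (α : I) : I → Bool := fun β ↦ decide (β = α)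

lemma onlyAt_injective [DecidableEq I] : Function.Injective (onlyAt : I → I → Bool) :=
  fun α β h ↦ by simpa [onlyAt] using congrFun h α

lemma sub_collision_le_familyProb [DecidableEq I] (hp : ∀ α, p α = unifProb {σ | X σ α})
    (α : I) :
    p α - unifProb {σ | X σ α ∧ ∃ β, β ≠ α ∧ X σ β} ≤ familyProb X (onlyAt α) := by
  rw [hp, sub_le_iff_le_add]
  refine unifProb_le_add fun σ hσ ↦ ?_
  by_cases h : ∃ β, β ≠ α ∧ X σ β
  · exact Or.inr ⟨hσ, h⟩
  · push Not at h
    refine Or.inl fun β ↦ ?_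
    by_cases hβ : β = α
    · simpa [onlyAt, hβ] using hσ
    · simpa [onlyAt, hβ] using h β hβ

variable [Fintype I]

lemma unifProb_iUnion_le (E : I → Set (Equiv.Perm (Fin n))) :
    unifProb (⋃ α, E α) ≤ ∑ α, unifProb (E α) := by
  simp only [unifProb, ← Finset.sum_div]
  gcongr
  exact_mod_cast Set.ncard_iUnion_le_of_fintype E

/-- The probability that independent Bernoulli variables with means `p` take the values `x`. -/
def bernoulliProb (p : I → ℝ) (x : I → Bool) : ℝ := ∏ α, if x α then p α else 1 - p α

lemma bernoulliProb_nonneg {p : I → ℝ} (h₀ : ∀ α, 0 ≤ p α) (h₁ : ∀ α, p α ≤ 1) (x : I → Bool) :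
    0 ≤ bernoulliProb p x :=
  Finset.prod_nonneg fun α _ ↦ by
    split_ifs
    exacts [h₀ α, sub_nonneg.2 (h₁ α)]

lemma one_sub_sum_le_familyProb (hp : ∀ α, p α = unifProb {σ | X σ α}) :
    1 - ∑ α, p α ≤ familyProb X fun _ ↦ false := by
  have hcover : Set.univ ⊆ {σ | ∀ α, X σ α ↔ false = true} ∪ ⋃ α, {σ | X σ α} := fun σ _ ↦ by
    by_cases h : ∃ α, X σ α
    · exact Or.inr (Set.mem_iUnion.2 h)
    · exact Or.inl fun α ↦ by simpa using not_exists.1 h α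
  have hunion := (unifProb_le_add hcover).trans
    (add_le_add_right (unifProb_iUnion_le fun α ↦ {σ | X σ α}) _)
  simp only [unifProb_univ, ← hp] at hunion
  rw [familyProb]
  linarith

lemma one_sub_sum_le_min (hp : ∀ α, p α = unifProb {σ | X σ α}) :
    1 - ∑ α, p α ≤ min (familyProb X fun _ ↦ false) (bernoulliProb p fun _ ↦ false) :=
  le_min (one_sub_sum_le_familyProb hp) <| by
    simpa [bernoulliProb] using
      one_sub_sum_le_prod_one_sub Finset.univ (marginal_nonneg hp) (marginal_le_one hp)

variable [DecidableEq I]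

lemma sum_familyProb (X : Equiv.Perm (Fin n) → I → Prop) : ∑ x, familyProb X x = 1 := by
  let value (σ : Equiv.Perm (Fin n)) (α : I) : Bool := decide (X σ α)
  have hfiber (x : I → Bool) : ({σ | ∀ α, X σ α ↔ x α = true} : Set (Equiv.Perm (Fin n))).ncard =
      ({σ | value σ = x} : Finset (Equiv.Perm (Fin n))).card := by
    rw [← Set.ncard_coe_finset]
    congr 1
    ext σ
    simp only [Set.mem_ofPred_eq, Finset.coe_filter, Finset.mem_univ, true_and, funext_iff]
    refine forall_congr' fun α ↦ ?_
    by_cases h : X σ α <;> cases x α <;> simp [value, h]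
  have hcard := Finset.card_eq_sum_card_fiberwise (s := Finset.univ) (t := Finset.univ)
    (f := value) (fun _ _ ↦ Finset.mem_coe.2 (Finset.mem_univ _))
  simp only [familyProb, unifProb, ← Finset.sum_div, hfiber]
  rw [← Nat.cast_sum, ← hcard, Finset.card_univ, Fintype.card_perm, Fintype.card_fin]
  exact div_self (by positivity)

lemma sum_bernoulliProb (p : I → ℝ) : ∑ x, bernoulliProb p x = 1 := by
  have h := Finset.prod_univ_sum (fun _ : I ↦ (Finset.univ : Finset Bool))
    fun α b ↦ if b then p α else 1 - p α
  rw [Fintype.piFinset_univ] at h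
  simpa [bernoulliProb] using h.symm

lemma mul_one_sub_sum_le_bernoulliProb (h₀ : ∀ α, 0 ≤ p α) (h₁ : ∀ α, p α ≤ 1) (α : I) :
    p α * (1 - ∑ β, p β) ≤ bernoulliProb p (onlyAt α) := by
  have hrest : ∏ β ∈ Finset.univ.erase α, (if onlyAt α β then p β else 1 - p β) =
      ∏ β ∈ Finset.univ.erase α, (1 - p β) :=
    Finset.prod_congr rfl fun β hβ ↦ by simp [onlyAt, Finset.ne_of_mem_erase hβ]
  have hsum : ∑ β ∈ Finset.univ.erase α, p β ≤ ∑ β, p β :=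
    Finset.sum_le_univ_sum_of_nonneg h₀
  calc p α * (1 - ∑ β, p β) ≤ p α * ∏ β ∈ Finset.univ.erase α, (1 - p β) :=
        mul_le_mul_of_nonneg_left ((sub_le_sub_left hsum 1).trans
          (one_sub_sum_le_prod_one_sub _ h₀ h₁)) (h₀ α)
    _ = bernoulliProb p (onlyAt α) := by
        rw [bernoulliProb, ← Finset.mul_prod_erase _ _ (Finset.mem_univ α), hrest]
        simp [onlyAt]

lemma dTVFamUnif_le_one_sub_sum_min (hp : ∀ α, p α = unifProb {σ | X σ α})
    (S : Finset (I → Bool)) :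
    dTVFamUnif X p ≤ 1 - ∑ x ∈ S, min (familyProb X x) (bernoulliProb p x) :=
  half_sum_abs_sub_le (fun _ ↦ unifProb_nonneg _)
    (bernoulliProb_nonneg (marginal_nonneg hp) (marginal_le_one hp)) (sum_familyProb X)
    (sum_bernoulliProb p) S

lemma dTVFamUnif_le_one (hp : ∀ α, p α = unifProb {σ | X σ α}) : dTVFamUnif X p ≤ 1 := by
  simpa using dTVFamUnif_le_one_sub_sum_min hp ∅

lemma dTVFamUnif_le_sum (hp : ∀ α, p α = unifProb {σ | X σ α}) : dTVFamUnif X p ≤ ∑ α, p α := by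
  have h := dTVFamUnif_le_one_sub_sum_min hp {fun _ ↦ false}
  rw [Finset.sum_singleton] at h
  linarith [one_sub_sum_le_min hp]

lemma sub_sub_le_min (hp : ∀ α, p α = unifProb {σ | X σ α}) (α : I) :
    p α - unifProb {σ | X σ α ∧ ∃ β, β ≠ α ∧ X σ β} - p α * ∑ β, p β ≤
      min (familyProb X (onlyAt α)) (bernoulliProb p (onlyAt α)) := by
  have hproduct : 0 ≤ p α * ∑ β, p β :=
    mul_nonneg (marginal_nonneg hp α) (Finset.sum_nonneg fun β _ ↦ marginal_nonneg hp β)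
  refine le_min ?_ ?_
  · linarith [sub_collision_le_familyProb hp α]
  · linarith [mul_one_sub_sum_le_bernoulliProb (marginal_nonneg hp) (marginal_le_one hp) α,
      unifProb_nonneg {σ | X σ α ∧ ∃ β, β ≠ α ∧ X σ β}]

lemma dTVFamUnif_le_sq_add_sum_collision (hp : ∀ α, p α = unifProb {σ | X σ α}) :
    dTVFamUnif X p ≤
      (∑ α, p α) ^ 2 + ∑ α, unifProb {σ | X σ α ∧ ∃ β, β ≠ α ∧ X σ β} := by
  have hnotMem : (fun _ ↦ false) ∉ Finset.univ.image (onlyAt : I → I → Bool) := fun h ↦ by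
    obtain ⟨α, -, hα⟩ := Finset.mem_image.1 h
    simpa [onlyAt] using congrFun hα α
  have hle := dTVFamUnif_le_one_sub_sum_min hp (insert (fun _ ↦ false) (Finset.univ.image onlyAt))
  rw [Finset.sum_insert hnotMem, Finset.sum_image onlyAt_injective.injOn] at hle
  have hsingle := Finset.sum_le_sum (s := Finset.univ) fun α _ ↦ sub_sub_le_min hp α
  simp only [Finset.sum_sub_distrib, ← Finset.sum_mul] at hsingle
  linarith [one_sub_sum_le_min hp]

end TotalVariation

section PatternOccurrences

lemma sum_unifProb_collision_le {n j : ℕ} (τ : Equiv.Perm (Fin j))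
    (hy : overlapRatio n j ≤ 1 / 8) :
    ∑ α : {α : Finset (Fin n) // α.card = j}, unifProb {σ |
      OccursOn τ σ α.1 ∧ ∃ β : {α : Finset (Fin n) // α.card = j}, β ≠ α ∧ OccursOn τ σ β.1} ≤
    8 * ((n.choose j : ℝ) / j.factorial * overlapRatio n j) := by
  refine le_trans ?_ (sum_overlap_term_le n j hy)
  simp only [unifProb, ← Finset.sum_div]
  gcongr
  exact_mod_cast (sum_ncard_multiple_le τ n).trans (card_multipleOccurrences_le τ n)

lemma lt_two_mul_of_overlapRatio_lt {n j : ℕ} (hj : 1 ≤ j) (hy : overlapRatio n j < 1 / 8) :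
    n < 2 * j := by
  by_contra! hn
  have hjn : (j : ℝ) ≤ (n - j : ℕ) := by exact_mod_cast (by omega : j ≤ n - j)
  have hj₁ : (1 : ℝ) ≤ j := by exact_mod_cast hj
  rw [overlapRatio, div_lt_iff₀ (by positivity)] at hy
  nlinarith

lemma le_min_one_inv_mul {x lam B : ℝ} (hlam : 0 < lam) (hx : x ≤ 1) (hxB : x ≤ B)
    (hB : 1 ≤ lam → lam ≤ B) : x ≤ min 1 lam⁻¹ * B := by
  rcases le_total 1 lam with h | h
  · rw [min_eq_right (inv_le_one_of_one_le₀ h), ← div_eq_inv_mul]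
    exact hx.trans ((one_le_div hlam).2 (hB h))
  · rwa [min_eq_left ((one_le_inv₀ hlam).2 h), one_mul]

lemma choose_div_factorial_pos {n j : ℕ} (hjn : j ≤ n) :
    0 < (n.choose j : ℝ) / j.factorial :=
  div_pos (Nat.cast_pos.2 (Nat.choose_pos hjn)) (Nat.cast_pos.2 j.factorial_pos)

lemma choose_mul_sub_choose_div_nonneg (n j : ℕ) :
    0 ≤ (n.choose j : ℝ) * ((n.choose j : ℝ) - ((n - j).choose j : ℝ)) / (j.factorial : ℝ) ^ 2 :=
  div_nonneg (mul_nonneg (Nat.cast_nonneg _) <| sub_nonneg.2 <| Nat.cast_le.2 <|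
    Nat.choose_le_choose j (n.sub_le j)) (sq_nonneg _)

theorem stmt1_general (n j : ℕ) (hj : 2 ≤ j) (hjn : j ≤ n) (τ : Equiv.Perm (Fin j))
    (lam d1 d2 D : ℝ)
    (hlam : lam = (n.choose j : ℝ) / (j.factorial : ℝ))
    (hd1 : d1 = (n.choose j : ℝ) * ((n.choose j : ℝ) - ((n - j).choose j : ℝ))
        / (j.factorial : ℝ) ^ 2)
    (hd2 : d2 = ∑ s ∈ Finset.Icc 1 (j - 1),
        (n.choose (2 * j - s) : ℝ) * 2 * (overlapCount τ s : ℝ) / ((2 * j - s).factorial : ℝ))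
    (hD : D = min 1 lam⁻¹ * (d1 + d2))
    (p : {α : Finset (Fin n) // α.card = j} → ℝ)
    (hp : ∀ α, p α = unifProb {σ | OccursOn τ σ α.1})
    (hmarg : ∀ α, p α = 1 / (j.factorial : ℝ)) :
    dTVFamUnif (fun σ α => OccursOn τ σ α.1) p ≤ 4 * D := by
  have hlam₀ : 0 < lam := hlam ▸ choose_div_factorial_pos hjn
  have hsum : ∑ α, p α = lam := by simp [hmarg, hlam, div_eq_mul_inv]
  have hone := dTVFamUnif_le_one hp
  have hfirst := hsum ▸ dTVFamUnif_le_sum hp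
  have hsecond := hsum ▸ dTVFamUnif_le_sq_add_sum_collision hp
  have hd2_ge : 2 * (lam * overlapRatio n j) ≤ d2 :=
    hlam ▸ hd2 ▸ two_mul_overlapRatio_le_sum_overlapCount hj τ
  have hratio : 0 ≤ lam * overlapRatio n j := mul_nonneg hlam₀.le (overlapRatio_nonneg n j)
  rw [hD, mul_left_comm]
  rcases le_or_gt (1 / 8) (overlapRatio n j) with hy | hy
  · have hd1₀ : 0 ≤ d1 := hd1 ▸ choose_mul_sub_choose_div_nonneg n j
    have hle : lam ≤ 4 * (d1 + d2) := by nlinarith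
    exact le_min_one_inv_mul hlam₀ hone (hfirst.trans hle) fun _ ↦ hle
  · have hd1_eq : d1 = lam ^ 2 := by
      have := lt_two_mul_of_overlapRatio_lt (by omega) hy
      rw [hd1, hlam, Nat.choose_eq_zero_of_lt (by omega : n - j < j)]
      ring
    have hcollision := hlam ▸ sum_unifProb_collision_le τ hy.le
    exact le_min_one_inv_mul hlam₀ hone (by nlinarith) fun h ↦ by nlinarith

end PatternOccurrences

/-- Theorem: total variation bound between the joint law of the pattern-occurrence
indicators `(X_α)_{α ∈ Γ_j}` of a uniformly random permutation of `[n]` and a family of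
independent Bernoulli random variables with the same marginals. -/
theorem stmt1 (n j : ℕ) (hj : 3 ≤ j) (hjn : j ≤ n) (τ : Equiv.Perm (Fin j))
    (lam d1 d2 D : ℝ)
    (hlam : lam = (n.choose j : ℝ) / (j.factorial : ℝ))
    (hd1 : d1 = (n.choose j : ℝ) * ((n.choose j : ℝ) - ((n - j).choose j : ℝ))
        / (j.factorial : ℝ) ^ 2)
    (hd2 : d2 = ∑ s ∈ Finset.Icc 1 (j - 1),
        (n.choose (2 * j - s) : ℝ) * 2 * (overlapCount τ s : ℝ) / ((2 * j - s).factorial : ℝ))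
    (hD : D = min 1 lam⁻¹ * (d1 + d2))
    (p : {α : Finset (Fin n) // α.card = j} → ℝ)
    (hp : ∀ α, p α = unifProb {σ | OccursOn τ σ α.1})
    (hmarg : ∀ α, p α = 1 / (j.factorial : ℝ)) :
    dTVFamUnif (fun σ α => OccursOn τ σ α.1) p ≤ 4 * D + 2 * lam / (j.factorial : ℝ) := by
  exact (stmt1_general n j (by omega) hjn τ lam d1 d2 D hlam hd1 hd2 hD p hp hmarg).trans
    (le_add_of_nonneg_right (by rw [hlam]; positivity))

end
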